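/- Let (M, Ω, V) be a graded von Neumann algebra. Then Z(M, V) = {0} if and only if the automorphism Ad_V is freely acting on M, i.e. the only x ∈ M satisfying x y = (V y V) x for all y ∈ M is x = 0. -/

import Mathlib

open scoped InnerProductSpace ComplexOrder

noncomputable section

variable {H : Type*} [NormedAddCommGroup H] [InnerProductSpace ℂ H] [CompleteSpace H]

/-- A graded von Neumann algebra in standard form: a von Neumann algebra `M` with a cyclic
and separating vector `Ω`, the associated modular data `(J, Δ^{it})` (characterized by the
Tomita-Takesaki relations below), and a `ℤ₂`-grading `V`. -/
structure GradedVN (H : Type*) [NormedAddCommGroup H] [InnerProductSpace ℂ H]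
    [CompleteSpace H] where
  M : VonNeumannAlgebra H
  Ω : H
  cyclic : Dense {ξ : H | ∃ x ∈ M, x Ω = ξ}
  separating : ∀ x ∈ M, x Ω = 0 → x = 0
  /-- the modular conjugation (an antiunitary involution) -/
  J : H → H
  J_add : ∀ ξ η, J (ξ + η) = J ξ + J η
  J_smul : ∀ (c : ℂ) (ξ), J (c • ξ) = starRingEnd ℂ c • J ξ
  J_inner : ∀ ξ η, ⟪J ξ, J η⟫_ℂ = ⟪η, ξ⟫_ℂ
  J_invol : ∀ ξ, J (J ξ) = ξ
  J_Ω : J Ω = Ω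
  /-- the modular group `Δ^{it}` -/
  U : ℝ → H ≃ₗᵢ[ℂ] H
  U_zero : ∀ ξ, U 0 ξ = ξ
  U_add : ∀ s t ξ, U (s + t) ξ = U s (U t ξ)
  U_cont : ∀ ξ, Continuous fun t : ℝ => U t ξ
  U_Ω : ∀ t, U t Ω = Ω
  J_U : ∀ t ξ, J (U t ξ) = U t (J ξ)
  flow_mem : ∀ t : ℝ, ∀ x ∈ M, ∃ y ∈ M, ∀ ξ, y ξ = U t (x (U (-t) ξ))
  /-- `J M J ⊆ M'` -/
  tomita : ∀ x ∈ M, ∀ y ∈ M, ∀ ξ, J (x (J (y ξ))) = y (J (x (J ξ)))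
  /-- `S = J Δ^{1/2}` maps `xΩ` to `x*Ω`, expressed via analytic continuation of the
  modular group. -/
  S_cond : ∀ x ∈ M, ∀ f : ℂ → H, Differentiable ℂ f → (∀ t : ℝ, f (t : ℂ) = U t (x Ω)) →
    J (f (-(Complex.I) / 2)) = star x Ω
  /-- the grading -/
  V : H →L[ℂ] H
  V_star : star V = V
  V_invol : ∀ ξ, V (V ξ) = ξ
  V_Ω : V Ω = Ω
  V_mem : ∀ x ∈ M, ∃ y ∈ M, ∀ ξ, y ξ = V (x (V ξ))

namespace GradedVN

variable (N : GradedVN H)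

/-- The `V`-twisted center `Z(M, V) = {x ∈ M | J x* J = x V}`. -/
def twistedCenter : Set (H →L[ℂ] H) :=
  {x | x ∈ N.M ∧ ∀ ξ, N.J (star x (N.J ξ)) = x (N.V ξ)}

/-- The center `Z(M)` of `M`. -/
def centerSet : Set (H →L[ℂ] H) :=
  {z | z ∈ N.M ∧ ∀ y ∈ N.M, z * y = y * z}

/-- The `Ad_V`-fixed points `M^γ`. -/
def gammaFixed : Set (H →L[ℂ] H) :=
  {x | x ∈ N.M ∧ ∀ ξ, N.V (x (N.V ξ)) = x ξ}

/-- The fixed points `M^α` of the modular flow. -/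
def flowFixed : Set (H →L[ℂ] H) :=
  {x | x ∈ N.M ∧ ∀ (t : ℝ) (ξ), x (N.U t ξ) = N.U t (x ξ)}

/-- The centralizer `Z_Ω(M)`. -/
def centralizerSet : Set (H →L[ℂ] H) :=
  {x | x ∈ N.M ∧ ∀ y ∈ N.M, ⟪N.Ω, x (y N.Ω)⟫_ℂ = ⟪N.Ω, y (x N.Ω)⟫_ℂ}

/-- The twisted center of the reduced algebra `(M_p, V_p)` for a central `Ad_V`-invariant
projection `p` (for such `p`, the modular conjugation of `(pMp, pΩ)` is `J` restricted
to `pH`, so the relative twisted center consists of the `p`-supported elements of `M`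
satisfying the twisted-center relation). -/
def tcRel (p : H →L[ℂ] H) : Set (H →L[ℂ] H) :=
  {x | x ∈ N.M ∧ x * p = x ∧ p * x = x ∧ ∀ ξ, N.J (star x (N.J ξ)) = x (N.V ξ)}

/-- `p` is an `Ad_V`-invariant central projection. -/
def IsCentralInvProj (p : H →L[ℂ] H) : Prop :=
  p ∈ N.centerSet ∧ star p = p ∧ p * p = p ∧ ∀ ξ, N.V (p (N.V ξ)) = p ξ

/-- `p` is an `Ad_V`-invariant central projection carrying a partial isometry in the
relative twisted center which is unitary on `pH`. -/
def HasPI (p : H →L[ℂ] H) : Prop :=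
  N.IsCentralInvProj p ∧ ∃ u ∈ N.tcRel p, star u * u = p ∧ u * star u = p

/-- Asymptotically abelian modular flow: `[α_t(x), y] → 0` weakly as `t → ∞`. -/
def AsympAbelian : Prop :=
  ∀ x ∈ N.M, ∀ y ∈ N.M, ∀ ξ η : H,
    Filter.Tendsto
      (fun t : ℝ => ⟪ξ, N.U t (x (N.U (-t) (y η))) - y (N.U t (x (N.U (-t) η)))⟫_ℂ)
      Filter.atTop (nhds 0)

/-- `V`-graded asymptotically abelian modular flow:
`[α_t(x), y]_V = α_t(x) y − (V y V) α_t(x) → 0` weakly as `t → ∞`. -/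
def GradedAsympAbelian : Prop :=
  ∀ x ∈ N.M, ∀ y ∈ N.M, ∀ ξ η : H,
    Filter.Tendsto
      (fun t : ℝ =>
        ⟪ξ, N.U t (x (N.U (-t) (y η))) - N.V (y (N.V (N.U t (x (N.U (-t) η)))))⟫_ℂ)
      Filter.atTop (nhds 0)

end GradedVN


namespace GradedVN

open MeasureTheory

lemma norm_gker (z : ℂ) (t : ℝ) :
    ‖Complex.exp (-((t : ℂ) - z) ^ 2)‖ = Real.exp (-(t - z.re) ^ 2 + z.im ^ 2) := by
  rw [Complex.norm_exp]
  congr 1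
  simp [pow_two]
  ring

lemma integrable_gauss_shift (b : ℝ) (hb : 0 < b) (a : ℝ) :
    Integrable (fun t : ℝ => Real.exp (-b * (t - a) ^ 2)) :=
  (integrable_exp_neg_mul_sq hb).comp_sub_right a

lemma integrable_gker (z : ℂ) (a : ℝ → H) (ha : Continuous a) (C : ℝ) (hC : ∀ t, ‖a t‖ ≤ C) :
    Integrable (fun t : ℝ => Complex.exp (-((t : ℂ) - z) ^ 2) • a t) := by
  have h := ((integrable_gauss_shift 1 one_pos z.re).const_mul (Real.exp (z.im ^ 2))).mul_const C
  refine h.mono' (by fun_prop) (Filter.Eventually.of_forall fun t => ?_)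
  rw [norm_smul, norm_gker, Real.exp_add]
  have : -1 * (t - z.re) ^ 2 = -(t - z.re) ^ 2 := by ring
  rw [this, mul_comm (Real.exp (z.im ^ 2))]
  gcongr
  exact hC t

variable (N : GradedVN H)

lemma cont_U (a : ℝ → H) (ha : Continuous a) : Continuous fun t => N.U t (a t) := by
  rw [continuous_iff_continuousAt]
  intro s
  have h1 : Filter.Tendsto (fun t => N.U t (a t - a s)) (nhds s) (nhds 0) := by
    rw [tendsto_zero_iff_norm_tendsto_zero]
    simp only [LinearIsometryEquiv.norm_map]
    have : Continuous fun t => ‖a t - a s‖ := by fun_prop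
    simpa using this.tendsto s
  have h2 : Filter.Tendsto (fun t => N.U t (a s)) (nhds s) (nhds (N.U s (a s))) :=
    (N.U_cont (a s)).tendsto s
  have h3 := h1.add h2
  simpa [ContinuousAt] using h3

def E (η : H) (z : ℂ) : H := ∫ t : ℝ, Complex.exp (-((t : ℂ) - z) ^ 2) • N.U t η

lemma E_int (η : H) (z : ℂ) :
    Integrable (fun t : ℝ => Complex.exp (-((t : ℂ) - z) ^ 2) • N.U t η) :=
  integrable_gker z _ (N.U_cont η) ‖η‖ (fun t => by simp)

lemma E_sub (η ζ : H) (z : ℂ) : N.E (η - ζ) z = N.E η z - N.E ζ z := by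
  unfold E
  rw [← integral_sub (N.E_int η z) (N.E_int ζ z)]
  simp [smul_sub]

lemma E_diff (η : H) : Differentiable ℂ (N.E η) := by
  intro z0
  have hb1 : Integrable (fun t : ℝ => ‖(t - z0.re) * Real.exp (-(1/2) * (t - z0.re) ^ 2)‖) :=
    ((integrable_mul_exp_neg_mul_sq (b := 1/2) (by norm_num)).comp_sub_right z0.re).norm
  have hb2 := (integrable_gauss_shift (1/2) (by norm_num) z0.re).const_mul (|z0.im| + 1)
  have hb := ((hb1.add hb2).const_mul (2 * Real.exp (1 + (|z0.im| + 1) ^ 2))).mul_const ‖η‖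
  have key := hasDerivAt_integral_of_dominated_loc_of_deriv_le (μ := volume) (𝕜 := ℂ)
    (F := fun z (t : ℝ) => Complex.exp (-((t : ℂ) - z) ^ 2) • N.U t η)
    (F' := fun z (t : ℝ) => (Complex.exp (-((t : ℂ) - z) ^ 2) * (2 * ((t : ℂ) - z))) • N.U t η)
    (x₀ := z0) (s := Metric.ball z0 1) (Metric.ball_mem_nhds z0 one_pos)
    (Filter.Eventually.of_forall fun z => (N.E_int η z).aestronglyMeasurable)
    (N.E_int η z0) ?_ (Filter.Eventually.of_forall fun t z hz => ?_) hb
    (Filter.Eventually.of_forall fun t z hz => ?_)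
  · exact key.2.differentiableAt
  · have := N.U_cont η
    exact Continuous.aestronglyMeasurable (by fun_prop)
  · rw [Metric.mem_ball, dist_eq_norm] at hz
    have hre : |z.re - z0.re| ≤ 1 := by
      have := Complex.abs_re_le_norm (z - z0)
      rw [Complex.sub_re] at this; linarith
    have him : |z.im| ≤ |z0.im| + 1 := by
      have := Complex.abs_im_le_norm (z - z0)
      rw [Complex.sub_im] at this
      have h2 := abs_sub_abs_le_abs_sub z.im z0.im
      linarith
    have him2 : z.im ^ 2 ≤ (|z0.im| + 1) ^ 2 := by
      rw [← sq_abs z.im]; gcongr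
    have hre2 : (z.re - z0.re) ^ 2 ≤ 1 := by
      rw [← sq_abs]; exact pow_le_one₀ (abs_nonneg _) hre
    have hsq : -(t - z.re) ^ 2 + z.im ^ 2 ≤
        (1 + (|z0.im| + 1) ^ 2) + -(1/2) * (t - z0.re) ^ 2 := by
      nlinarith [sq_nonneg ((t - z.re) - (z.re - z0.re))]
    have hn : ‖(t : ℂ) - z‖ ≤ |t - z0.re| + (|z0.im| + 1) := by
      calc ‖(t : ℂ) - z‖ = ‖((t : ℂ) - z0) - (z - z0)‖ := by congr 1; ring
        _ ≤ ‖(t : ℂ) - z0‖ + ‖z - z0‖ := norm_sub_le _ _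
        _ ≤ (|((t : ℂ) - z0).re| + |((t : ℂ) - z0).im|) + 1 := by
          gcongr
          exact Complex.norm_le_abs_re_add_abs_im _
        _ = _ := by simp; ring
    rw [norm_smul, norm_mul, norm_mul, norm_gker, LinearIsometryEquiv.norm_map]
    simp only [Pi.add_apply, Complex.norm_two]
    rw [norm_mul, Real.norm_eq_abs, Real.norm_eq_abs, Real.abs_exp, ← add_mul]
    refine mul_le_mul_of_nonneg_right ?_ (norm_nonneg η)
    calc Real.exp (-(t - z.re) ^ 2 + z.im ^ 2) * (2 * ‖(t : ℂ) - z‖)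
        ≤ Real.exp ((1 + (|z0.im| + 1) ^ 2) + -(1/2) * (t - z0.re) ^ 2) *
          (2 * (|t - z0.re| + (|z0.im| + 1))) := by gcongr
      _ = _ := by rw [Real.exp_add]; ring
  · have h1 : HasDerivAt (fun z : ℂ => -((t : ℂ) - z) ^ 2) (2 * ((t : ℂ) - z)) z := by
      have := (((hasDerivAt_id z).const_sub (t : ℂ)).pow 2).neg
      refine this.congr_deriv ?_
      simp
    exact h1.cexp.smul_const _

lemma U_E (s : ℝ) (η : H) (z : ℂ) : N.U s (N.E η z) = N.E η (z + s) := by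
  unfold E
  have h := ((N.U s).toContinuousLinearEquiv : H →L[ℂ] H).integral_comp_comm (N.E_int η z)
  have h' : N.U s (∫ t : ℝ, Complex.exp (-((t : ℂ) - z) ^ 2) • N.U t η) =
      ∫ t : ℝ, N.U s (Complex.exp (-((t : ℂ) - z) ^ 2) • N.U t η) := h.symm
  rw [h', ← integral_add_right_eq_self
    (fun t : ℝ => Complex.exp (-((t : ℂ) - (z + s)) ^ 2) • N.U t η) s]
  congr 1
  ext t
  rw [map_smul, ← N.U_add, add_comm s t]
  congr 3
  push_cast
  ring

def JL : H →L[ℝ] H :=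
  LinearMap.mkContinuous
    { toFun := N.J
      map_add' := N.J_add
      map_smul' := fun c ξ => by
        have := N.J_smul (c : ℂ) ξ
        simpa using this } 1 (fun ξ => by
    have h := N.J_inner ξ ξ
    rw [inner_self_eq_norm_sq_to_K, inner_self_eq_norm_sq_to_K] at h
    have h2 : ‖N.J ξ‖ ^ 2 = ‖ξ‖ ^ 2 := by exact_mod_cast h
    have h3 : ‖N.J ξ‖ = ‖ξ‖ := by
      have := congrArg Real.sqrt h2
      simpa [Real.sqrt_sq] using this
    simp [h3])

lemma JL_apply (ξ : H) : N.JL ξ = N.J ξ := rfl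

lemma cont_J : Continuous N.J := N.JL.continuous

lemma J_E (η : H) (z : ℂ) : N.J (N.E η z) = N.E (N.J η) (starRingEnd ℂ z) := by
  unfold E
  rw [← JL_apply, ← N.JL.integral_comp_comm (N.E_int η z)]
  congr 1
  ext t
  rw [JL_apply, N.J_smul, N.J_U, ← Complex.exp_conj]
  simp

lemma inner_U (t : ℝ) (ξ η : H) : ⟪N.U t ξ, η⟫_ℂ = ⟪ξ, N.U (-t) η⟫_ℂ := by
  rw [← (N.U t).inner_map_map ξ, ← N.U_add]
  simp [N.U_zero]

lemma inner_E (ξ η : H) (z : ℂ) :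
    ⟪N.E ξ z, η⟫_ℂ = ⟪ξ, N.E η (-starRingEnd ℂ z)⟫_ℂ := by
  rw [← inner_conj_symm]
  unfold E
  rw [← integral_inner (N.E_int ξ z), ← integral_inner (N.E_int η _), ← integral_conj,
    ← integral_neg_eq_self]
  congr 1
  ext t
  rw [inner_conj_symm, inner_smul_left, inner_smul_right, inner_U, neg_neg, ← Complex.exp_conj]
  congr 2
  simp
  ring

lemma U_cancel (t : ℝ) (ξ : H) : N.U t (N.U (-t) ξ) = ξ := by
  rw [← N.U_add]; simp [N.U_zero]

lemma conj_int (y : H →L[ℂ] H) (ξ : H) : Integrable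
    (fun t : ℝ => Complex.exp (-((t : ℂ) - 0) ^ 2) • N.U t (y (N.U (-t) ξ))) := by
  refine integrable_gker 0 _ (N.cont_U _ ?_) (‖y‖ * ‖ξ‖) (fun t => ?_)
  · exact y.continuous.comp ((N.U_cont ξ).comp continuous_neg)
  · rw [LinearIsometryEquiv.norm_map]
    simpa using y.le_opNorm (N.U (-t) ξ)

def sm (y : H →L[ℂ] H) : H →L[ℂ] H :=
  LinearMap.mkContinuous
    { toFun := fun ξ => ∫ t : ℝ, Complex.exp (-((t : ℂ) - 0) ^ 2) • N.U t (y (N.U (-t) ξ))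
      map_add' := fun ξ η => by
        rw [← integral_add (N.conj_int y ξ) (N.conj_int y η)]
        simp
      map_smul' := fun c ξ => by
        rw [RingHom.id_apply, ← integral_smul]
        congr 1
        ext t
        simp only [map_smul]
        rw [smul_comm] }
    ((∫ t : ℝ, Real.exp (-1 * (t - 0) ^ 2)) * ‖y‖) (fun ξ => by
      rw [mul_assoc, ← integral_mul_const]
      refine norm_integral_le_of_norm_le
        ((integrable_gauss_shift 1 one_pos 0).mul_const _) (Filter.Eventually.of_forall fun t => ?_)
      rw [norm_smul, norm_gker, LinearIsometryEquiv.norm_map]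
      have h := y.le_opNorm (N.U (-t) ξ)
      rw [LinearIsometryEquiv.norm_map] at h
      simp only [Complex.zero_re, Complex.zero_im]
      have : -(t - 0) ^ 2 + (0:ℝ) ^ 2 = -1 * (t - 0) ^ 2 := by ring
      rw [this]
      gcongr)

lemma sm_apply (y : H →L[ℂ] H) (ξ : H) : N.sm y ξ =
    ∫ t : ℝ, Complex.exp (-((t : ℂ) - 0) ^ 2) • N.U t (y (N.U (-t) ξ)) := rfl

lemma sm_mem (y : H →L[ℂ] H) (hy : y ∈ N.M) : N.sm y ∈ N.M := by
  rw [← N.M.commutant_commutant, VonNeumannAlgebra.mem_commutant_iff]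
  intro g hg
  rw [VonNeumannAlgebra.mem_commutant_iff] at hg
  ext ξ
  rw [mul_apply_eq_comp, mul_apply_eq_comp, sm_apply, sm_apply,
    ← g.integral_comp_comm (N.conj_int y ξ)]
  congr 1
  ext t
  obtain ⟨w, hw, hw2⟩ := N.flow_mem t y hy
  rw [map_smul, ← hw2, ← hw2]
  congr 1
  exact (congrArg (fun T : H →L[ℂ] H => T ξ) (hg w hw)).symm

lemma sm_Ω (y : H →L[ℂ] H) : N.sm y N.Ω = N.E (y N.Ω) 0 := by
  rw [sm_apply]
  simp only [N.U_Ω]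
  rfl

lemma sm_star (y : H →L[ℂ] H) : star (N.sm y) = N.sm (star y) := by
  rw [ContinuousLinearMap.star_eq_adjoint]
  symm
  rw [ContinuousLinearMap.eq_adjoint_iff]
  intro ξ η
  rw [← inner_conj_symm, sm_apply, sm_apply, ← integral_inner (N.conj_int (star y) ξ),
    ← integral_inner (N.conj_int y η), ← integral_conj]
  congr 1
  ext t
  rw [inner_conj_symm, inner_smul_left, inner_smul_right, inner_U, ← Complex.exp_conj,
    ContinuousLinearMap.star_eq_adjoint, ContinuousLinearMap.adjoint_inner_left]
  congr 1
  · simp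
  · rw [inner_U, neg_neg]

lemma J_E_half (y : H →L[ℂ] H) (hy : y ∈ N.M) :
    N.J (N.E (y N.Ω) (-(Complex.I) / 2)) = N.E (star y N.Ω) 0 := by
  rw [← sm_Ω, ← sm_star]
  refine N.S_cond (N.sm y) (N.sm_mem y hy) _ (N.E_diff _) (fun t => ?_)
  rw [sm_Ω, U_E, zero_add]

lemma E_bound (ζ : H) (z : ℂ) : ‖N.E ζ z‖ ≤
    (∫ t : ℝ, Real.exp (-1 * t ^ 2)) * (Real.exp (z.im ^ 2) * ‖ζ‖) := by
  rw [← integral_sub_right_eq_self (fun t : ℝ => Real.exp (-1 * t ^ 2)) z.re,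
    ← integral_mul_const]
  refine norm_integral_le_of_norm_le
    ((integrable_gauss_shift 1 one_pos z.re).mul_const _) (Filter.Eventually.of_forall fun t => ?_)
  rw [norm_smul, norm_gker, LinearIsometryEquiv.norm_map, Real.exp_add]
  apply le_of_eq
  rw [neg_one_mul]
  ring

lemma eq_zero_of_E (ζ : H) (h : N.E ζ 0 = - N.E ζ (-(Complex.I) / 2)) : ζ = 0 := by
  have h1 : ∀ s : ℝ, N.E ζ s = - N.E ζ (s + -(Complex.I) / 2) := by
    intro s
    have := congrArg (N.U s) h
    rw [map_neg, U_E, U_E, zero_add, add_comm (-(Complex.I) / 2)] at this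
    exact this
  have hd2 : Differentiable ℂ (fun z => - N.E ζ (z + -(Complex.I) / 2)) :=
    ((N.E_diff ζ).comp (by fun_prop : Differentiable ℂ fun z : ℂ => z + -(Complex.I) / 2)).neg
  have h2 : N.E ζ = fun z => - N.E ζ (z + -(Complex.I) / 2) := by
    refine AnalyticOnNhd.eq_of_frequently_eq (z₀ := 0)
      (fun z _ => (N.E_diff ζ).analyticAt z) (fun z _ => hd2.analyticAt z) ?_
    have ht : Filter.Tendsto (fun n : ℕ => (((1 / ((n : ℝ) + 1) : ℝ)) : ℂ)) Filter.atTop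
        (nhdsWithin 0 {0}ᶜ) := by
      rw [tendsto_nhdsWithin_iff]
      constructor
      · have := (Complex.continuous_ofReal.tendsto 0).comp
          (tendsto_one_div_add_atTop_nhds_zero_nat (𝕜 := ℝ))
        simpa [Function.comp_def] using this
      · refine Filter.Eventually.of_forall fun n => ?_
        have : (1 / ((n : ℝ) + 1)) ≠ 0 := by positivity
        simpa using (Complex.ofReal_ne_zero.mpr this)
    exact ht.frequently (Filter.Frequently.of_forall fun n => h1 _)
  have h3 : ∀ (k : ℤ) (z : ℂ), ‖N.E ζ (z + k * (Complex.I / 2))‖ = ‖N.E ζ z‖ := by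
    have hp : Function.Periodic (fun z => ‖N.E ζ z‖) (Complex.I / 2) := by
      intro z
      have := congrFun h2 (z + Complex.I / 2)
      simp only at this ⊢
      rw [this, norm_neg]
      congr 2
      ring
    intro k z
    exact hp.int_mul k z
  have h4 : Bornology.IsBounded (Set.range (N.E ζ)) := by
    rw [isBounded_iff_forall_norm_le]
    refine ⟨(∫ t : ℝ, Real.exp (-1 * t ^ 2)) * (Real.exp 1 * ‖ζ‖), ?_⟩
    rintro _ ⟨z, rfl⟩
    rw [← h3 (-⌊2 * z.im⌋) z]
    refine (N.E_bound _ _).trans ?_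
    have hi : (0:ℝ) ≤ ∫ t : ℝ, Real.exp (-1 * t ^ 2) := integral_nonneg fun t => by positivity
    gcongr
    have e : (z + ((-⌊2 * z.im⌋ : ℤ) : ℂ) * (Complex.I / 2)).im = (2 * z.im - ⌊2 * z.im⌋) / 2 := by
      simp [-Int.self_sub_floor]; ring
    rw [e]
    have a1 := Int.floor_le (2 * z.im)
    have a2 := Int.lt_floor_add_one (2 * z.im)
    nlinarith
  have h5 : ∀ z, N.E ζ z = 0 := by
    intro z
    have hc := (N.E_diff ζ).apply_eq_apply_of_bounded h4 z (z + -(Complex.I) / 2)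
    have : N.E ζ z = - N.E ζ (z + -(Complex.I) / 2) := congrFun h2 z
    rw [← hc] at this
    have h6 : (2 : ℂ) • N.E ζ z = 0 := by
      rw [two_smul]
      exact add_eq_zero_iff_eq_neg.mpr this
    exact (smul_eq_zero.mp h6).resolve_left two_ne_zero
  -- Fourier inversion
  set f : ℝ → H := fun t => Complex.exp (-((t : ℂ) - 0) ^ 2) • N.U t ζ with hf
  have hfc : Continuous f := by
    have := N.U_cont ζ
    fun_prop
  have hF : FourierTransform.fourier f = 0 := by
    ext w
    rw [Real.fourier_eq']
    have hz := h5 (-(Real.pi * w) * Complex.I)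
    unfold E at hz
    have : ∀ t : ℝ, Complex.exp (((-2 * Real.pi * inner ℝ t w : ℝ) : ℂ) * Complex.I) • f t =
        Complex.exp ((-(Real.pi * w) * Complex.I) ^ 2) •
        (Complex.exp (-((t : ℂ) - (-(Real.pi * w) * Complex.I)) ^ 2) • N.U t ζ) := by
      intro t
      rw [hf]
      simp only [smul_smul, ← Complex.exp_add]
      congr 2
      simp
      ring
    simp only [this]
    rw [integral_smul, hz, smul_zero]
    rfl
  have hinv := hfc.fourierInv_fourier_eq (N.E_int ζ 0) (by rw [hF]; exact integrable_zero _ _ _)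
  have h0 := congrFun hinv 0
  rw [hF] at h0
  have : f 0 = ζ := by simp [hf, N.U_zero]
  rw [← this, ← h0, Real.fourierInv_eq']
  simp

lemma ext_dense {T S : H → H} (hT : Continuous T) (hS : Continuous S)
    (h : ∀ y ∈ N.M, T (y N.Ω) = S (y N.Ω)) (ξ : H) : T ξ = S ξ := by
  refine congrFun (hT.ext_on N.cyclic hS ?_) ξ
  rintro _ ⟨y, hy, rfl⟩
  exact h y hy

lemma J_fix (x : H →L[ℂ] H) (hx : x ∈ N.M) (hs : star x = x)
    (hc : ∀ y ∈ N.M, ⟪N.Ω, x (y N.Ω)⟫_ℂ = ⟪N.Ω, y (x N.Ω)⟫_ℂ) : N.J (x N.Ω) = x N.Ω := by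
  have adj : ∀ (y : H →L[ℂ] H) (a b : H), ⟪star y a, b⟫_ℂ = ⟪a, y b⟫_ℂ := by
    intro y a b
    rw [ContinuousLinearMap.star_eq_adjoint, ContinuousLinearMap.adjoint_inner_left]
  have ha : N.E (N.J (x N.Ω)) 0 = N.E (x N.Ω) (-(Complex.I) / 2) := by
    have := N.J_E_half x hx
    rw [hs] at this
    rw [← N.J_invol (N.E (x N.Ω) _), this, J_E, map_zero]
  have hb : N.E (x N.Ω) 0 = N.E (N.J (x N.Ω)) (-(Complex.I) / 2) := by
    rw [← sub_eq_zero]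
    refine N.cyclic.eq_zero_of_inner_left (𝕜 := ℂ) ?_
    rintro _ ⟨y, hy, rfl⟩
    rw [inner_sub_left, sub_eq_zero, inner_E, inner_E]
    have e : -(starRingEnd ℂ) (-(Complex.I) / 2) = -(Complex.I) / 2 := by
      rw [map_div₀, map_neg, Complex.conj_I, Complex.conj_ofNat]
      ring
    rw [e, map_zero, neg_zero, ← sm_Ω]
    have k1 : ⟪x N.Ω, N.sm y N.Ω⟫_ℂ = ⟪N.Ω, x (N.sm y N.Ω)⟫_ℂ := by
      rw [← adj x, hs]
    rw [k1, hc _ (N.sm_mem y hy), ← adj, sm_star, sm_Ω, ← N.J_E_half y hy]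
    have k2 := N.J_inner (N.E (y N.Ω) (-(Complex.I) / 2)) (N.J (x N.Ω))
    rwa [N.J_invol] at k2
  have := N.eq_zero_of_E (x N.Ω - N.J (x N.Ω)) (by
    rw [E_sub, E_sub, ha, hb]; abel)
  exact (sub_eq_zero.mp this).symm

/-- intertwiners -/
def IsInt (x : H →L[ℂ] H) : Prop := ∀ y ∈ N.M, x * y = N.V * y * N.V * x

lemma VV : N.V * N.V = 1 := by ext ξ; simp [N.V_invol]

lemma Vmem (y : H →L[ℂ] H) (hy : y ∈ N.M) : N.V * y * N.V ∈ N.M := by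
  obtain ⟨w, hw, h⟩ := N.V_mem y hy
  have : N.V * y * N.V = w := by ext ξ; simp [h]
  rwa [this]

lemma VyV (y : H →L[ℂ] H) : N.V * (N.V * y * N.V) * N.V = y := by
  rw [show N.V * (N.V * y * N.V) * N.V = (N.V * N.V) * y * (N.V * N.V) by noncomm_ring, VV]
  simp

lemma IsInt.star' {x : H →L[ℂ] H} (h : N.IsInt x) : N.IsInt (star x) := by
  intro y hy
  have := congrArg star (h _ (star_mem (N.Vmem y hy)))
  simp only [star_mul, star_star, N.V_star] at this
  rw [this, show N.V * (N.V * y * N.V * N.V) = N.V * (N.V * y * N.V) * N.V by noncomm_ring, VyV]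

lemma IsInt.conjV {x : H →L[ℂ] H} (h : N.IsInt x) : N.IsInt (N.V * x * N.V) := by
  intro y hy
  have := h _ (N.Vmem y hy)
  rw [VyV] at this
  calc N.V * x * N.V * y = N.V * (x * (N.V * y * N.V)) * N.V := by
        simp only [mul_assoc, N.VV, mul_one]
    _ = N.V * (y * x) * N.V := by rw [this]
    _ = N.V * y * (N.V * N.V) * x * N.V := by rw [VV]; noncomm_ring
    _ = _ := by noncomm_ring

lemma IsInt.even {x : H →L[ℂ] H} (h : N.IsInt x) (hx : x ∈ N.M) (hs : star x = x) :
    N.V * x * N.V = x := by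
  have h2 := h.conjV
  set w := N.V * x * N.V with hw
  have hwm : w ∈ N.M := N.Vmem x hx
  have hws : star w = w := by simp [hw, N.V_star, hs, mul_assoc]
  have e1 := h x hx
  have e2 := h w hwm
  have e3 := h2 x hx
  have e4 := h2 w hwm
  rw [← hw] at e1 e3
  rw [hw, VyV, ← hw] at e2 e4
  have : star (x - w) * (x - w) = 0 := by
    rw [star_sub, hs, hws, sub_mul, mul_sub, mul_sub, e1, e4]
    have : x * w = w * w := e4.symm
    have : w * x = x * x := e1.symm
    simp_all
  have := (CStarRing.star_mul_self_eq_zero_iff _).mp this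
  exact (sub_eq_zero.mp this).symm

lemma sa_mem {x : H →L[ℂ] H} (h : N.IsInt x) (hx : x ∈ N.M) (hs : star x = x) :
    x ∈ N.twistedCenter := by
  have hev := h.even N hx hs
  have hVx : N.V (x N.Ω) = x N.Ω := by
    have := congrArg (fun T : H →L[ℂ] H => T N.Ω) (congrArg (fun T => N.V * T) hev)
    simp only [mul_apply_eq_comp, N.V_invol, N.V_Ω] at this
    exact this.symm
  have hJ := N.J_fix x hx hs (fun y hy => by
    have := congrArg (fun T : H →L[ℂ] H => T N.Ω) (h y hy)
    simp only [mul_apply_eq_comp] at this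
    rw [this, hVx, ← ContinuousLinearMap.adjoint_inner_left,
      ← ContinuousLinearMap.star_eq_adjoint, N.V_star, N.V_Ω])
  refine ⟨hx, fun ξ => ?_⟩
  rw [hs]
  have cJ := N.cont_J
  refine N.ext_dense (T := fun ξ => N.J (x (N.J ξ))) (S := fun ξ => x (N.V ξ))
    (by fun_prop) (by fun_prop) (fun y hy => ?_) ξ
  rw [N.tomita x hx y hy, N.J_Ω, hJ]
  have := congrArg (fun T : H →L[ℂ] H => T N.Ω) (h _ (N.Vmem y hy))
  rw [VyV] at this
  simp only [mul_apply_eq_comp, N.V_Ω] at this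
  exact this.symm

end GradedVN

/-- `Z(M, V) = {0}` if and only if `Ad_V` is freely acting on `M`, i.e.
the only `x ∈ M` with `x y = (V y V) x` for all `y ∈ M` is `x = 0`. -/
theorem twisted_center_trivial_iff_freely_acting {H : Type*} [NormedAddCommGroup H]
    [InnerProductSpace ℂ H] [CompleteSpace H] (N : GradedVN H) :
    N.twistedCenter = {0} ↔
      ∀ x ∈ N.M, (∀ y ∈ N.M, x * y = N.V * y * N.V * x) → x = 0 := by
  constructor
  · intro hZ x hx hint
    have hint' : N.IsInt x := hint
    have hst : N.IsInt (star x) := hint'.star'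
    have hsm : star x ∈ N.M := star_mem hx
    have key : ∀ a : H →L[ℂ] H, a ∈ N.M → N.IsInt a → star a = a → a = 0 := by
      intro a ha hi hs
      have := N.sa_mem hi ha hs
      rw [hZ] at this
      exact this
    have h1 : x + star x = 0 := by
      refine key _ (add_mem hx hsm) (fun y hy => ?_) (by simp [add_comm])
      rw [add_mul, mul_add, hint' y hy, hst y hy]
    have h2 : Complex.I • (x - star x) = 0 := by
      refine key _ (N.M.toStarSubalgebra.smul_mem (sub_mem hx hsm) _) (fun y hy => ?_) ?_
      · rw [smul_mul_assoc, mul_smul_comm, sub_mul, mul_sub, hint' y hy, hst y hy]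
      · rw [star_smul, star_sub, star_star]
        simp [smul_sub]
        abel
    have h3 : x - star x = 0 := (smul_eq_zero.mp h2).resolve_left Complex.I_ne_zero
    have h4 : (2 : ℂ) • x = 0 := by
      rw [two_smul]
      calc x + x = (x + star x) + (x - star x) := by abel
        _ = 0 := by rw [h1, h3, add_zero]
    exact (smul_eq_zero.mp h4).resolve_left two_ne_zero
  · intro hfree
    ext x
    constructor
    · rintro ⟨hx, hJ⟩
      refine hfree x hx (fun y hy => ?_)
      ext ξ
      have h := N.tomita (star x) (star_mem hx) _ (N.Vmem y hy) (N.V ξ)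
      rw [hJ, hJ] at h
      simpa [N.V_invol] using h
    · rintro rfl
      refine ⟨zero_mem _, fun ξ => ?_⟩
      have : N.J 0 = 0 := by simpa using N.J_smul 0 0
      simp [this]
end
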